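/- (Privacy of the membership-private extension against up to t colluders.) Fix an owner index j₀ ∈ {1,…,n}, a designated honest client j* ∈ {1,…,n}, data x ∈ 𝔽_q^ℓ, and, for every j' ≠ j*, fixed noise vectors z^{(j')} ∈ 𝔽_q^t. For j' ∈ {1,…,n} let x̄^{(j')} ∈ 𝔽_q^ℓ equal x if j' = j₀ and the zero vector otherwise. Fix a subset C ⊆ {1,…,n} with |C| ≤ t. If z^{(j*)} is drawn from the uniform distribution on 𝔽_q^t, then the distribution of the aggregated share tuple ( Σ_{j'=1}^n f_{x̄^{(j')}, z^{(j')}}(α_j) )_{j∈C} is the uniform distribution on 𝔽_q^C; in particular it does not depend on the data x nor on the owner index j₀. -/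

import Mathlib

/-!
Encoding is linear in the pair (data, noise), so the aggregated shares are the shares of one
encoding, whose noise is the sum of all noises: as a function of the honest client's noise they
are a constant plus a linear map. That linear map is onto because a polynomial of degree less than
`ℓ + t` can be prescribed at the `ℓ` data nodes and at up to `t` further points. The fibres of a
surjective homomorphism are equinumerous, so it carries the uniform distribution to the uniform one.
-/

open Polynomial

/-- The Lagrange/LCC encoding polynomial of data `x` and noise `z`. -/
noncomputable def lccEncode {F : Type*} [Field F] {ℓ t : ℕ} (β : Fin (ℓ + t) → F)
    (x : Fin ℓ → F) (z : Fin t → F) : F[X] :=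
  Lagrange.interpolate Finset.univ β (Fin.append x z)

section UniformDistribution

variable {A B : Type*} [Fintype A] [Nonempty A]

theorem pmf_eq_uniformOfFintype_of_forall_eq (p : PMF A) (h : ∀ a b, p a = p b) :
    p = PMF.uniformOfFintype A := by
  ext a
  have total : p a * Fintype.card A = 1 := by
    calc p a * Fintype.card A = ∑' b, p b := by
          simp only [h _ a, tsum_fintype, Finset.sum_const, Finset.card_univ, nsmul_eq_mul,
            mul_comm]
      _ = 1 := p.tsum_coe
  rw [PMF.uniformOfFintype_apply]
  exact ENNReal.eq_inv_of_mul_eq_one_left total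

theorem map_uniformOfFintype_apply [DecidableEq B] (f : A → B) (b : B) :
    PMF.map f (PMF.uniformOfFintype A) b =
      (Finset.univ.filter fun a => f a = b).card * (Fintype.card A : ENNReal)⁻¹ := by
  simp only [PMF.map_apply, PMF.uniformOfFintype_apply, tsum_fintype, eq_comm (a := b),
    ← Finset.sum_filter, Finset.sum_const, nsmul_eq_mul]

theorem map_const_add_uniformOfFintype_of_surjective {G H : Type*} [AddGroup G] [Fintype G]
    [AddGroup H] [Fintype H] (φ : G →+ H) (hφ : Function.Surjective φ) (c : H) :
    PMF.map (fun g => c + φ g) (PMF.uniformOfFintype G) = PMF.uniformOfFintype H := by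
  classical
  refine pmf_eq_uniformOfFintype_of_forall_eq _ fun h h' => ?_
  simp only [map_uniformOfFintype_apply, ← eq_neg_add_iff_add_eq]
  rw [AddMonoidHom.card_fiber_eq_of_mem_range φ (hφ (-c + h)) (hφ (-c + h'))]

end UniformDistribution

section LagrangeCoding

variable {F : Type*} [Field F] {ℓ t : ℕ} {κ : Type*}

/-- The share vector of a Lagrange encoding, that is its values at the points `α`, as a linear
map in the pair (data, noise). -/
noncomputable def lccShares (β : Fin (ℓ + t) → F) (α : κ → F) :
    (Fin ℓ → F) × (Fin t → F) →ₗ[F] (κ → F) where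
  toFun p k := (lccEncode β p.1 p.2).eval (α k)
  map_add' p q := by
    have append_add : Fin.append (p.1 + q.1) (p.2 + q.2) =
        Fin.append p.1 p.2 + Fin.append q.1 q.2 := by
      ext i; cases i using Fin.addCases <;> simp
    ext k
    simp only [lccEncode, Prod.fst_add, Prod.snd_add, append_add, map_add, eval_add, Pi.add_apply]
  map_smul' a p := by
    have append_smul : Fin.append (a • p.1) (a • p.2) = a • Fin.append p.1 p.2 := by
      ext i; cases i using Fin.addCases <;> simp
    ext k
    simp only [lccEncode, Prod.smul_fst, Prod.smul_snd, append_smul, map_smul, eval_smul,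
      Pi.smul_apply, RingHom.id_apply]

theorem lccShares_apply (β : Fin (ℓ + t) → F) (α : κ → F) (x : Fin ℓ → F) (z : Fin t → F) (k : κ) :
    lccShares β α (x, z) k = (lccEncode β x z).eval (α k) :=
  rfl

theorem sum_eval_lccEncode_update {ι : Type*} [Fintype ι] [DecidableEq ι]
    (β : Fin (ℓ + t) → F) (α : κ → F) (x : ι → Fin ℓ → F) (z : ι → Fin t → F) (i₀ : ι)
    (w : Fin t → F) :
    (fun k => ∑ i, (lccEncode β (x i) (Function.update z i₀ w i)).eval (α k)) =
      lccShares β α (∑ i, x i, ∑ i ∈ Finset.univ \ {i₀}, z i) + lccShares β α (0, w) := by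
  have aggregate : (∑ i, (x i, Function.update z i₀ w i)) =
      (∑ i, x i, ∑ i ∈ Finset.univ \ {i₀}, z i) + (0, w) := by
    ext1
    · simp [Prod.fst_sum]
    · simp [Prod.snd_sum, Finset.sum_update_of_mem (Finset.mem_univ i₀), add_comm]
  rw [← map_add, ← aggregate, map_sum]
  ext k
  simp only [Finset.sum_apply, lccShares_apply]

theorem eq_lccEncode_of_degree_lt {β : Fin (ℓ + t) → F} (hβ : Function.Injective β) {p : F[X]}
    (hp : p.degree < (ℓ + t : ℕ)) :
    p = lccEncode β (fun u => p.eval (β (Fin.castAdd t u)))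
      (fun u => p.eval (β (Fin.natAdd ℓ u))) := by
  refine Lagrange.eq_interpolate_of_eval_eq _ hβ.injOn (by simpa using hp) fun i _ => ?_
  cases i using Fin.addCases <;> simp

theorem exists_degree_lt_eval_eq {ι : Type*} [Fintype ι] {v : ι → F} (hv : Function.Injective v)
    (r : ι → F) : ∃ p : F[X], p.degree < Fintype.card ι ∧ ∀ i, p.eval (v i) = r i := by
  classical
  exact ⟨Lagrange.interpolate Finset.univ v r, Lagrange.degree_interpolate_lt r hv.injOn,
    fun i => Lagrange.eval_interpolate_at_node r hv.injOn (Finset.mem_univ i)⟩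

theorem lccShares_noise_surjective [Fintype κ] {β : Fin (ℓ + t) → F} {α : κ → F}
    (hβ : Function.Injective β) (hα : Function.Injective α)
    (hβα : ∀ u k, β (Fin.castAdd t u) ≠ α k) (hκ : Fintype.card κ ≤ t)
    (x : Fin ℓ → F) :
    Function.Surjective fun w => lccShares β α (x, w) := by
  intro s
  have nodes_injective : Function.Injective (Sum.elim (β ∘ Fin.castAdd t) α) :=
    (hβ.comp (Fin.castAdd_injective ℓ t)).sumElim hα hβα
  obtain ⟨p, p_degree, p_eval⟩ := exists_degree_lt_eval_eq nodes_injective (Sum.elim x s)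
  have p_data : (fun u => p.eval (β (Fin.castAdd t u))) = x := funext fun u => p_eval (.inl u)
  have p_degree_lt : p.degree < (ℓ + t : ℕ) := by
    refine p_degree.trans_le (Nat.cast_le.2 ?_)
    simpa only [Fintype.card_sum, Fintype.card_fin] using Nat.add_le_add_left hκ ℓ
  have p_encode := eq_lccEncode_of_degree_lt hβ p_degree_lt
  rw [p_data] at p_encode
  refine ⟨fun u => p.eval (β (Fin.natAdd ℓ u)), funext fun k => ?_⟩
  calc (lccEncode β x fun u => p.eval (β (Fin.natAdd ℓ u))).eval (α k) = p.eval (α k) := by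
        rw [← p_encode]
    _ = s k := p_eval (.inr k)

end LagrangeCoding

theorem secfc_membership_privacy_general {F : Type*} [Field F] [Fintype F] {ι κ : Type*}
    [Fintype ι] [DecidableEq ι] [Fintype κ] [DecidableEq κ] {ℓ t : ℕ}
    {β : Fin (ℓ + t) → F} (hβ : Function.Injective β) {α : κ → F} (hα : Function.Injective α)
    (hβα : ∀ u k, β (Fin.castAdd t u) ≠ α k) (hκ : Fintype.card κ ≤ t)
    (x : ι → Fin ℓ → F) (z : ι → Fin t → F) (i₀ : ι) :
    PMF.map
        (fun w k => ∑ i, (lccEncode β (x i) (Function.update z i₀ w i)).eval (α k))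
        (PMF.uniformOfFintype (Fin t → F))
      = PMF.uniformOfFintype (κ → F) := by
  rw [funext (sum_eval_lccEncode_update β α x z i₀)]
  exact map_const_add_uniformOfFintype_of_surjective
    ((lccShares β α).comp (LinearMap.inr F _ _)).toAddMonoidHom
    (lccShares_noise_surjective hβ hα hβα hκ 0) _

/-- Privacy of the membership-private extension against up to `t` colluders: with
one designated honest client `j*` drawing its noise uniformly at random (all other
clients' noises being arbitrary but fixed), the tuple of aggregated shares
`(Σ_{j'} f_{x̄^{(j')}, z^{(j')}}(α_j))_{j ∈ C}` observed by any set `C` of at most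
`t` colluding clients is uniform on `𝔽_q^C`, hence reveals nothing about the data
`x` or the owner index `j₀`. -/
theorem secfc_membership_privacy
    {F : Type*} [Field F] [Fintype F]
    (ℓ t n : ℕ) (hℓ : 0 < ℓ) (ht : 0 < t) (hn : 0 < n)
    (β : Fin (ℓ + t) → F) (hβ : Function.Injective β)
    (α : Fin n → F) (hα : Function.Injective α)
    (hαβ : ∀ j u, α j ≠ β u)
    (j₀ jstar : Fin n) (x : Fin ℓ → F) (z : Fin n → Fin t → F)
    (C : Finset (Fin n)) (hC : C.card ≤ t) :
    PMF.map
        (fun (w : Fin t → F) (j : C) =>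
          ∑ j' : Fin n,
            (lccEncode β (if j' = j₀ then x else 0)
              (if j' = jstar then w else z j')).eval (α (j : Fin n)))
        (PMF.uniformOfFintype (Fin t → F))
      = PMF.uniformOfFintype (C → F) := by
  simpa only [Function.update_apply] using
    secfc_membership_privacy_general (α := fun j : C => α j) hβ (hα.comp Subtype.val_injective)
      (fun u j => (hαβ j (Fin.castAdd t u)).symm) (by simpa only [Fintype.card_coe] using hC)
      (fun j' => if j' = j₀ then x else 0) z jstar
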